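/- For every solution of the backward Ricci flow system of class U3I0 (case (i)), the quantity BCD² is conserved, B(t)C(t)D(t)² = λ₂λ₃λ₄² for all t ∈ [0,T), and consequently D(t) = λ₄(1 − 3λ₄t/(λ₂λ₃))^{−1/3} for all t ∈ [0,T). -/

import Mathlib

open Real Set ENNReal

/-- The time domain `[0, T)` where `T ∈ (0, ∞]` is an extended nonnegative real. -/
def flowDomain (T : ℝ≥0∞) : Set ℝ := {t : ℝ | 0 ≤ t ∧ ENNReal.ofReal t < T}

/-!
The `A`-dependent terms of `B'C + BC'` cancel, so `P = BC` satisfies `P' = -2D`, and the flow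
descends to the planar system `P' = -2D`, `D' = D² / P`. Here `PD²` is conserved. Eliminating `P`
through its value `κ` gives the Bernoulli equation `D' = D⁴ / κ`, under which `D⁻³` decreases at
the constant rate `3 / κ`.
-/

theorem eq_of_hasDerivWithinAt_zero {𝕜 E : Type*} [RCLike 𝕜] [NormedAddCommGroup E]
    [NormedSpace 𝕜 E] {f : 𝕜 → E} {s : Set 𝕜} (hs : Convex ℝ s)
    (hf : ∀ t ∈ s, HasDerivWithinAt f 0 s t) {t₀ t : 𝕜} (ht₀ : t₀ ∈ s) (ht : t ∈ s) :
    f t = f t₀ := by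
  have hle : ‖f t - f t₀‖ ≤ 0 * ‖t - t₀‖ :=
    hs.norm_image_sub_le_of_norm_hasDerivWithin_le hf (fun _ _ ↦ norm_zero.le) ht₀ ht
  rwa [zero_mul, norm_le_zero_iff, sub_eq_zero] at hle

theorem inv_pow_eq_of_hasDerivWithinAt_pow_succ {𝕜 : Type*} [RCLike 𝕜] {y : 𝕜 → 𝕜}
    {s : Set 𝕜} {k : 𝕜} {n : ℕ} (hs : Convex ℝ s)
    (hy : ∀ t ∈ s, HasDerivWithinAt y (k * y t ^ (n + 1)) s t)
    (hy0 : ∀ t ∈ s, y t ≠ 0) {t₀ t : 𝕜} (ht₀ : t₀ ∈ s) (ht : t ∈ s) :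
    (y t ^ n)⁻¹ = (y t₀ ^ n)⁻¹ - n * k * (t - t₀) := by
  have hderiv : ∀ u ∈ s, HasDerivWithinAt (fun u ↦ (y u ^ n)⁻¹ + n * k * u) 0 s u := by
    intro u hu
    have hyu := hy0 u hu
    refine ((((hy u hu).fun_pow n).fun_inv (pow_ne_zero n hyu)).add
      ((hasDerivWithinAt_id u s).const_mul (n * k))).congr_deriv ?_
    rcases n with _ | n
    · simp
    · rw [Nat.add_sub_cancel]
      field_simp
      ring
  linear_combination eq_of_hasDerivWithinAt_zero hs hderiv ht₀ ht

theorem eq_mul_rpow_of_hasDerivWithinAt_pow_succ {y : ℝ → ℝ} {s : Set ℝ} {k : ℝ} {n : ℕ}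
    (hn : n ≠ 0) (hs : Convex ℝ s) (hy : ∀ t ∈ s, HasDerivWithinAt y (k * y t ^ (n + 1)) s t)
    (hy0 : ∀ t ∈ s, y t ≠ 0) {t₀ t : ℝ} (ht₀ : t₀ ∈ s) (ht : t ∈ s) :
    y t = y t₀ * (1 - n * k * y t₀ ^ n * (t - t₀)) ^ (-(1 : ℝ) / n) := by
  have hyt₀ := hy0 t₀ ht₀
  have hpos : 0 < y t / y t₀ :=
    hs.isPreconnected.lt_of_ne (f := fun u ↦ y u / y t₀)
      (fun u hu ↦ (hy u hu).continuousWithinAt.div_const _)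
      (fun u hu ↦ div_ne_zero (hy0 u hu) hyt₀) ⟨t₀, ht₀, by simp [hyt₀]⟩ ht
  have hbase : 1 - n * k * y t₀ ^ n * (t - t₀) = ((y t / y t₀) ^ n)⁻¹ := by
    rw [div_pow, inv_div, div_eq_mul_inv,
      inv_pow_eq_of_hasDerivWithinAt_pow_succ hs hy hy0 ht₀ ht]
    field_simp
  have hroot : (((y t / y t₀) ^ n)⁻¹) ^ (-(1 : ℝ) / n) = y t / y t₀ := by
    rw [neg_div, one_div, Real.rpow_neg (by positivity), Real.inv_rpow (by positivity), inv_inv,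
      pow_rpow_inv_natCast hpos.le hn]
  rw [hbase, hroot, mul_div_cancel₀ _ hyt₀]

theorem mul_sq_eq_of_planar_system {𝕜 : Type*} [RCLike 𝕜] {P D : 𝕜 → 𝕜} {s : Set 𝕜}
    (hs : Convex ℝ s) (hP0 : ∀ t ∈ s, P t ≠ 0)
    (hP : ∀ t ∈ s, HasDerivWithinAt P (-2 * D t) s t)
    (hD : ∀ t ∈ s, HasDerivWithinAt D (D t ^ 2 / P t) s t) {t₀ t : 𝕜} (ht₀ : t₀ ∈ s)
    (ht : t ∈ s) : P t * D t ^ 2 = P t₀ * D t₀ ^ 2 := by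
  refine eq_of_hasDerivWithinAt_zero (f := fun u ↦ P u * D u ^ 2) hs (fun u hu ↦ ?_) ht₀ ht
  have hPu := hP0 u hu
  refine ((hP u hu).fun_mul ((hD u hu).fun_pow 2)).congr_deriv ?_
  push_cast
  field_simp
  ring

theorem eq_mul_rpow_of_planar_system {P D : ℝ → ℝ} {s : Set ℝ} (hs : Convex ℝ s)
    (hP0 : ∀ t ∈ s, P t ≠ 0) (hP : ∀ t ∈ s, HasDerivWithinAt P (-2 * D t) s t)
    (hD : ∀ t ∈ s, HasDerivWithinAt D (D t ^ 2 / P t) s t) {t₀ t : ℝ} (ht₀ : t₀ ∈ s)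
    (ht : t ∈ s) : D t = D t₀ * (1 - 3 * D t₀ * (t - t₀) / P t₀) ^ (-(1 : ℝ) / 3) := by
  have hcons : ∀ u ∈ s, P u * D u ^ 2 = P t₀ * D t₀ ^ 2 := fun _ hu ↦
    mul_sq_eq_of_planar_system hs hP0 hP hD ht₀ hu
  have hPt₀ := hP0 t₀ ht₀
  rcases eq_or_ne (D t₀) 0 with hDt₀ | hDt₀
  · have hDt : D t = 0 := by simpa [hDt₀, hP0 t ht] using hcons t ht
    rw [hDt, hDt₀, zero_mul]
  have hD0 : ∀ u ∈ s, D u ≠ 0 := by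
    intro u hu
    have hne : P u * D u ^ 2 ≠ 0 := hcons u hu ▸ mul_ne_zero hPt₀ (pow_ne_zero 2 hDt₀)
    exact (pow_ne_zero_iff two_ne_zero).1 (right_ne_zero_of_mul hne)
  have hbern : ∀ u ∈ s, HasDerivWithinAt D ((P t₀ * D t₀ ^ 2)⁻¹ * D u ^ (3 + 1)) s u := by
    intro u hu
    have hPu := hP0 u hu
    have hDu := hD0 u hu
    refine (hD u hu).congr_deriv ?_
    rw [← hcons u hu]
    field_simp
  rw [eq_mul_rpow_of_hasDerivWithinAt_pow_succ three_ne_zero hs hbern hD0 ht₀ ht]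
  congr 2
  push_cast
  field_simp

theorem hasDerivWithinAt_mul_of_flow {𝕜 : Type*} [NontriviallyNormedField 𝕜] {B C : 𝕜 → 𝕜}
    {s : Set 𝕜} {t a d : 𝕜} (ha : a ≠ 0) (hB0 : B t ≠ 0) (hC0 : C t ≠ 0)
    (hB : HasDerivWithinAt B (-(C t / a) - d / C t + B t ^ 2 / (a * C t)) s t)
    (hC : HasDerivWithinAt C (-(B t / a) - d / B t + C t ^ 2 / (a * B t)) s t) :
    HasDerivWithinAt (fun u ↦ B u * C u) (-2 * d) s t := by
  refine (hB.fun_mul hC).congr_deriv ?_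
  field_simp
  ring

theorem convex_flowDomain (T : ℝ≥0∞) : Convex ℝ (flowDomain T) := by
  refine OrdConnected.convex ⟨?_⟩
  rintro x ⟨hx, _⟩ y ⟨_, hy⟩ z ⟨hxz, hzy⟩
  exact ⟨hx.trans hxz, (ENNReal.ofReal_le_ofReal hzy).trans_lt hy⟩

theorem zero_mem_flowDomain {T : ℝ≥0∞} (hT : 0 < T) : (0 : ℝ) ∈ flowDomain T :=
  ⟨le_rfl, by rwa [ENNReal.ofReal_zero]⟩

theorem stmt7_general {s : Set ℝ} (hs : Convex ℝ s) {A B C D : ℝ → ℝ}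
    (hA0 : ∀ t ∈ s, A t ≠ 0) (hB0 : ∀ t ∈ s, B t ≠ 0) (hC0 : ∀ t ∈ s, C t ≠ 0)
    (hB : ∀ t ∈ s,
      HasDerivWithinAt B (-(C t / A t) - D t / C t + B t ^ 2 / (A t * C t)) s t)
    (hC : ∀ t ∈ s,
      HasDerivWithinAt C (-(B t / A t) - D t / B t + C t ^ 2 / (A t * B t)) s t)
    (hD : ∀ t ∈ s, HasDerivWithinAt D (D t ^ 2 / (B t * C t)) s t)
    {t₀ t : ℝ} (ht₀ : t₀ ∈ s) (ht : t ∈ s) :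
    B t * C t * D t ^ 2 = B t₀ * C t₀ * D t₀ ^ 2 ∧
      D t = D t₀ * (1 - 3 * D t₀ * (t - t₀) / (B t₀ * C t₀)) ^ (-(1 : ℝ) / 3) := by
  have hBC0 : ∀ u ∈ s, B u * C u ≠ 0 := fun u hu ↦ mul_ne_zero (hB0 u hu) (hC0 u hu)
  have hBC : ∀ u ∈ s, HasDerivWithinAt (fun v ↦ B v * C v) (-2 * D u) s u := fun u hu ↦
    hasDerivWithinAt_mul_of_flow (hA0 u hu) (hB0 u hu) (hC0 u hu) (hB u hu) (hC u hu)
  exact ⟨mul_sq_eq_of_planar_system hs hBC0 hBC hD ht₀ ht,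
    eq_mul_rpow_of_planar_system hs hBC0 hBC hD ht₀ ht⟩

/-- For every solution of the backward Ricci flow system of class `U3I0`, case (i),
the quantity `BCD²` is conserved, `B(t)C(t)D(t)² = λ₂λ₃λ₄²`, and consequently
`D(t) = λ₄(1 − 3λ₄t/(λ₂λ₃))^{−1/3}` for all `t ∈ [0,T)`. -/
theorem stmt7 (T : ℝ≥0∞) (hT : 0 < T)
    (lam1 lam2 lam3 lam4 : ℝ)
    (hlam1 : 0 < lam1) (hlam2 : 0 < lam2) (hlam3 : 0 < lam3) (hlam4 : 0 < lam4)
    (A B C D : ℝ → ℝ)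
    (hpos : ∀ t ∈ flowDomain T, 0 < A t ∧ 0 < B t ∧ 0 < C t ∧ 0 < D t)
    (hA : ∀ t ∈ flowDomain T,
      HasDerivWithinAt A (-(B t / C t) - C t / B t - 2) (flowDomain T) t)
    (hB : ∀ t ∈ flowDomain T,
      HasDerivWithinAt B (-(C t / A t) - D t / C t + B t ^ 2 / (A t * C t)) (flowDomain T) t)
    (hC : ∀ t ∈ flowDomain T,
      HasDerivWithinAt C (-(B t / A t) - D t / B t + C t ^ 2 / (A t * B t)) (flowDomain T) t)
    (hD : ∀ t ∈ flowDomain T,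
      HasDerivWithinAt D (D t ^ 2 / (B t * C t)) (flowDomain T) t)
    (hA0 : A 0 = lam1) (hB0 : B 0 = lam2) (hC0 : C 0 = lam3) (hD0 : D 0 = lam4) :
    ∀ t ∈ flowDomain T,
      B t * C t * D t ^ 2 = lam2 * lam3 * lam4 ^ 2 ∧
      D t = lam4 * (1 - 3 * lam4 * t / (lam2 * lam3)) ^ (-(1 : ℝ) / 3) := by
  subst hB0 hC0 hD0
  intro t ht
  simpa only [sub_zero] using stmt7_general (convex_flowDomain T) (fun u hu ↦ (hpos u hu).1.ne')
    (fun u hu ↦ (hpos u hu).2.1.ne') (fun u hu ↦ (hpos u hu).2.2.1.ne') hB hC hD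
    (zero_mem_flowDomain hT) ht
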